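/- Let f : ℝ^m → ℝ be twice continuously differentiable, let g(z) = f(z ⊙ z), and let z ∈ ℝ^m with ‖z‖₂ = 1 satisfy the stationarity condition 2 diag(z) ∇f(z ⊙ z) + 2γ z = 0 for some γ ∈ ℝ. Set w = z ⊙ z. Then for every direction d ∈ ℝ^m with d_i = 0 whenever z_i = 0, the second-order quadratic forms of the two problems coincide: dᵀ(∇²g(z) + 2γ I) d = δwᵀ ∇²f(w) δw, where δw = 2 diag(z) d. -/

import Mathlib

open Matrix

/-- The componentwise squaring map `z ↦ z ⊙ z`. -/
noncomputable def hadamardSq {m : ℕ} (z : EuclideanSpace ℝ (Fin m)) :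
    EuclideanSpace ℝ (Fin m) :=
  WithLp.toLp 2 fun i => z i * z i

/-- The Hessian matrix of second partial derivatives of `f` at `x`. -/
noncomputable def hessianMatrix {m : ℕ} (f : EuclideanSpace ℝ (Fin m) → ℝ)
    (x : EuclideanSpace ℝ (Fin m)) : Matrix (Fin m) (Fin m) ℝ :=
  Matrix.of fun i j => gradient (fun y => gradient f y j) x i

/-!
Differentiating `g(z) = f(z ⊙ z)` twice gives
`∇²g(z) = 2 diag(∇f(w)) + 2 diag(z) ∇²f(w) 2 diag(z)` with `w = z ⊙ z`. The second summand yields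
the form `δwᵀ ∇²f(w) δw`. Stationarity gives `∇f(w)ᵢ = -γ` wherever `zᵢ ≠ 0`, hence on the support
of `d`, so there the curvature term `2 diag(∇f(w))` cancels against `2γ I`.
-/

theorem dotProduct_diagonal_mul_mul_diagonal_mulVec {n R : Type*} [Fintype n] [DecidableEq n]
    [CommSemiring R] (A : Matrix n n R) (s v : n → R) :
    v ⬝ᵥ ((diagonal s * A * diagonal s) *ᵥ v) =
      (fun i => s i * v i) ⬝ᵥ (A *ᵥ fun i => s i * v i) := by
  have diagonal_mulVec : diagonal s *ᵥ v = fun i => s i * v i := funext (mulVec_diagonal s v)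
  rw [← mulVec_mulVec, ← mulVec_mulVec, dotProduct_mulVec, ← mulVec_transpose,
    diagonal_transpose, diagonal_mulVec]

section Gradient

theorem gradient_fun_mul {F : Type*} [NormedAddCommGroup F] [InnerProductSpace ℝ F]
    [CompleteSpace F] {a b : F → ℝ} {x : F} (ha : DifferentiableAt ℝ a x)
    (hb : DifferentiableAt ℝ b x) :
    gradient (fun y => a y * b y) x = a x • gradient b x + b x • gradient a x := by
  refine ext_inner_right ℝ fun v => ?_
  simp [inner_add_left, inner_smul_left, fderiv_fun_mul ha hb]

variable {ι : Type*} [Fintype ι]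

theorem gradient_apply_eq_fderiv_single [DecidableEq ι] (f : EuclideanSpace ℝ ι → ℝ)
    (x : EuclideanSpace ℝ ι) (i : ι) :
    gradient f x i = fderiv ℝ f x (EuclideanSpace.single i 1) := by
  rw [← inner_gradient_left, EuclideanSpace.inner_single_right, one_mul, conj_trivial]

theorem differentiableAt_gradient_apply {f : EuclideanSpace ℝ ι → ℝ} {x : EuclideanSpace ℝ ι}
    (hf : DifferentiableAt ℝ (fderiv ℝ f) x) (i : ι) :
    DifferentiableAt ℝ (fun y => gradient f y i) x := by
  classical
  simp only [gradient_apply_eq_fderiv_single]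
  exact hf.clm_apply (differentiableAt_const _)

theorem gradient_const_mul_coord [DecidableEq ι] (c : ℝ) (x : EuclideanSpace ℝ ι) (i : ι) :
    gradient (fun y : EuclideanSpace ℝ ι => c * y i) x = EuclideanSpace.single i c := by
  have hasFDerivAt_coord : HasFDerivAt (fun y : EuclideanSpace ℝ ι => c * y i)
      (c • (EuclideanSpace.proj i : EuclideanSpace ℝ ι →L[ℝ] ℝ)) x :=
    (EuclideanSpace.proj i : EuclideanSpace ℝ ι →L[ℝ] ℝ).hasFDerivAt.const_mul c
  refine ext_inner_right ℝ fun v => ?_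
  simp [hasFDerivAt_coord.fderiv, EuclideanSpace.inner_single_left]

end Gradient

section HadamardSq

open scoped Topology

variable {m : ℕ} {f : EuclideanSpace ℝ (Fin m) → ℝ} {z : EuclideanSpace ℝ (Fin m)}

theorem hasFDerivAt_hadamardSq (z : EuclideanSpace ℝ (Fin m)) :
    HasFDerivAt hadamardSq
      (toEuclideanCLM (n := Fin m) (𝕜 := ℝ) (diagonal fun i => 2 * z i)) z := by
  rw [← hasFDerivWithinAt_univ, hasFDerivWithinAt_euclidean]
  intro i
  rw [hasFDerivWithinAt_univ]
  have hasFDerivAt_coord :=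
    (EuclideanSpace.proj i : EuclideanSpace ℝ (Fin m) →L[ℝ] ℝ).hasFDerivAt (x := z)
  refine (hasFDerivAt_coord.mul hasFDerivAt_coord).congr_fderiv ?_
  ext v
  simp only [PiLp.proj_apply, _root_.add_apply, _root_.smul_apply, smul_eq_mul,
    ContinuousLinearMap.comp_apply, ofLp_toEuclideanCLM, mulVec_diagonal]
  ring

theorem gradient_comp_hadamardSq_apply (hf : DifferentiableAt ℝ f (hadamardSq z)) (i : Fin m) :
    gradient (fun y => f (hadamardSq y)) z i = 2 * z i * gradient f (hadamardSq z) i := by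
  have derivative_single : toEuclideanCLM (n := Fin m) (𝕜 := ℝ) (diagonal fun i => 2 * z i)
      (EuclideanSpace.single i 1) = (2 * z i) • EuclideanSpace.single i 1 := by
    ext j
    rcases eq_or_ne j i with rfl | hji <;> simp [mulVec_diagonal, *]
  have chain_rule : HasFDerivAt (fun y => f (hadamardSq y)) _ z :=
    hf.hasFDerivAt.comp z (hasFDerivAt_hadamardSq z)
  rw [gradient_apply_eq_fderiv_single, gradient_apply_eq_fderiv_single, chain_rule.fderiv,
    ContinuousLinearMap.comp_apply, derivative_single, map_smul, smul_eq_mul]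

theorem hessianMatrix_comp_hadamardSq (hf : ∀ᶠ y in 𝓝 (hadamardSq z), DifferentiableAt ℝ f y)
    (hf' : DifferentiableAt ℝ (fderiv ℝ f) (hadamardSq z)) :
    hessianMatrix (fun y => f (hadamardSq y)) z =
      diagonal (fun i => 2 * gradient f (hadamardSq z) i) +
        diagonal (fun i => 2 * z i) * hessianMatrix f (hadamardSq z) *
          diagonal (fun i => 2 * z i) := by
  ext i j
  have differentiableAt_sq : DifferentiableAt ℝ hadamardSq z :=
    (hasFDerivAt_hadamardSq z).differentiableAt
  have first_order : (fun y => gradient (fun y => f (hadamardSq y)) y j) =ᶠ[𝓝 z]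
      fun y => 2 * y j * gradient f (hadamardSq y) j :=
    (differentiableAt_sq.continuousAt.eventually hf).mono fun y hy =>
      gradient_comp_hadamardSq_apply hy j
  have differentiableAt_partial := differentiableAt_gradient_apply hf' j
  have differentiableAt_partial_comp :
      DifferentiableAt ℝ (fun y => gradient f (hadamardSq y) j) z :=
    differentiableAt_partial.comp z differentiableAt_sq
  have second_order : hessianMatrix (fun y => f (hadamardSq y)) z i j =
      2 * z j * (2 * z i * hessianMatrix f (hadamardSq z) i j) +
        gradient f (hadamardSq z) j * EuclideanSpace.single j (2 : ℝ) i := by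
    simp only [hessianMatrix, of_apply]
    rw [first_order.gradient_eq, gradient_fun_mul (by fun_prop) differentiableAt_partial_comp,
      gradient_const_mul_coord]
    simp only [PiLp.add_apply, PiLp.smul_apply, smul_eq_mul,
      gradient_comp_hadamardSq_apply differentiableAt_partial]
  rw [second_order, Matrix.add_apply, mul_diagonal, diagonal_mul, PiLp.single_apply,
    diagonal_apply]
  split_ifs with hij
  · rw [hij]
    ring
  · ring

theorem second_order_quadratic_forms_agree_general (m : ℕ)
    (f : EuclideanSpace ℝ (Fin m) → ℝ) (z : EuclideanSpace ℝ (Fin m)) (γ : ℝ)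
    (hf : ∀ᶠ y in 𝓝 (hadamardSq z), DifferentiableAt ℝ f y)
    (hf' : DifferentiableAt ℝ (fderiv ℝ f) (hadamardSq z))
    (hstat : ∀ i, 2 * z i * gradient f (hadamardSq z) i + 2 * γ * z i = 0)
    (d : Fin m → ℝ) (hd : ∀ i, z i = 0 → d i = 0) :
    d ⬝ᵥ ((hessianMatrix (fun z => f (hadamardSq z)) z +
        (2 * γ) • (1 : Matrix (Fin m) (Fin m) ℝ)) *ᵥ d) =
      (fun i => 2 * z i * d i) ⬝ᵥ
        (hessianMatrix f (hadamardSq z) *ᵥ fun i => 2 * z i * d i) := by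
  have multiplier_cancels :
      diagonal (fun i => 2 * gradient f (hadamardSq z) i) *ᵥ d + (2 * γ) • d = 0 := by
    ext i
    simp only [Pi.add_apply, mulVec_diagonal, Pi.smul_apply, smul_eq_mul, Pi.zero_apply]
    rcases eq_or_ne (z i) 0 with hzi | hzi
    · simp [hd i hzi]
    · have gradient_eq_neg : gradient f (hadamardSq z) i = -γ :=
        mul_left_cancel₀ hzi (by linarith [hstat i])
      rw [gradient_eq_neg]
      ring
  rw [hessianMatrix_comp_hadamardSq hf hf', add_right_comm, add_mulVec, add_mulVec, smul_mulVec,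
    one_mulVec, multiplier_cancels, zero_add, dotProduct_diagonal_mul_mul_diagonal_mulVec]

end HadamardSq

/-- At a stationary point `z` of the sphere problem, for every direction `d`
vanishing where `z` vanishes, the second-order quadratic form of the sphere
problem, `dᵀ(∇²g(z) + 2γI)d` with `g(z) = f(z ⊙ z)`, equals the second-order
quadratic form `δwᵀ ∇²f(w) δw` of the simplex problem, where `w = z ⊙ z` and
`δw = 2 diag(z) d`. -/
theorem second_order_quadratic_forms_agree (m : ℕ)
    (f : EuclideanSpace ℝ (Fin m) → ℝ) (hf : ContDiff ℝ 2 f)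
    (z : EuclideanSpace ℝ (Fin m)) (γ : ℝ) (hz : ‖z‖ = 1)
    (hstat : ∀ i, 2 * z i * gradient f (hadamardSq z) i + 2 * γ * z i = 0)
    (d : Fin m → ℝ) (hd : ∀ i, z i = 0 → d i = 0) :
    d ⬝ᵥ ((hessianMatrix (fun z => f (hadamardSq z)) z + (2 * γ) • (1 : Matrix (Fin m) (Fin m) ℝ)) *ᵥ d) =
      (fun i => 2 * z i * d i) ⬝ᵥ (hessianMatrix f (hadamardSq z) *ᵥ fun i => 2 * z i * d i) :=
  second_order_quadratic_forms_agree_general m f z γ (.of_forall (hf.differentiable two_ne_zero))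
    ((hf.fderiv_right one_add_one_eq_two.le).differentiable_one _) hstat d hd
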